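/- arXiv:2510.01813 — 2 statements merged into one kernel-verified Lean document; each statement's English description precedes it below -/
import Mathlib

section
/- Assume ℓ_i ≥ 0 for all i and ℓ_{r_1} ≤ ℓ_{r_2} ≤ … ≤ ℓ_{r_N}. If e' is a descendant of e in the EP tree, then ζ(e) ≤ ζ(e'). -/
open scoped BigOperators

/-- `j*(e)`: the (1-indexed) largest position `j` with `e_{r_j} = 1`; `j*(0) = 0`. -/
def jstar {N : ℕ} (r : Equiv.Perm (Fin N)) (e : Fin N → ZMod 2) : ℕ :=
  (Finset.univ.filter fun j : Fin N => e (r j) = 1).sup fun j => (j : ℕ) + 1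

/-- The child relation of the EP tree on `F₂^N`: the root `0` has a single child
(the vector with a `1` in coordinate `r_1`); a nonzero `e` with `j*(e) < N` has a
left child (coordinate `r_{j*}` set to `0`, coordinate `r_{j*+1}` set to `1`) and a
right child (coordinate `r_{j*+1}` set to `1`); a node with `j*(e) = N` has no children. -/
def Child {N : ℕ} (r : Equiv.Perm (Fin N)) (e c : Fin N → ZMod 2) : Prop :=
  (e = 0 ∧ ∃ h : 0 < N,
    c = Function.update (0 : Fin N → ZMod 2) (r ⟨0, h⟩) 1) ∨
  (e ≠ 0 ∧ ∃ h : jstar r e < N,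
    c = Function.update
        (Function.update e (r ⟨jstar r e - 1, lt_of_le_of_lt (Nat.sub_le _ _) h⟩) 0)
        (r ⟨jstar r e, h⟩) 1 ∨
    c = Function.update e (r ⟨jstar r e, h⟩) 1)

/-- Soft weight of an error pattern: `ζ(e) = Σ_{i : e_i = 1} ℓ_i`. -/
noncomputable def zeta {N : ℕ} (ℓ : Fin N → ℝ) (e : Fin N → ZMod 2) : ℝ :=
  ∑ i, if e i = 1 then ℓ i else 0

/-!
By maximality of `j*(e)`, coordinate `r_{j*+1}` of `e` is unoccupied. A left child therefore trades
`ℓ_{r_{j*}}` for the no smaller `ℓ_{r_{j*+1}}`, while the root's child and a right child only add a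
nonnegative term.
-/

section

variable {N : ℕ}

theorem zeta_update (ℓ : Fin N → ℝ) (e : Fin N → ZMod 2) (a : Fin N) (v : ZMod 2) :
    zeta ℓ (Function.update e a v) + (if e a = 1 then ℓ a else 0) =
      zeta ℓ e + (if v = 1 then ℓ a else 0) := by
  let weight (i : Fin N) (x : ZMod 2) : ℝ := if x = 1 then ℓ i else 0
  have zeta_update_eq (x : ZMod 2) : zeta ℓ (Function.update e a x) =
      weight a x + ∑ i ∈ Finset.univ \ {a}, weight i (e i) := by
    change ∑ i, weight i (Function.update e a x i) = _
    simp_rw [Function.apply_update weight]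
    exact Finset.sum_update_of_mem (Finset.mem_univ a) _ _
  have zeta_eq : zeta ℓ e = weight a (e a) + ∑ i ∈ Finset.univ \ {a}, weight i (e i) := by
    rw [← zeta_update_eq, Function.update_eq_self]
  rw [zeta_update_eq, zeta_eq]
  ring

theorem zeta_update_one_of_ne_one (ℓ : Fin N → ℝ) {e : Fin N → ZMod 2} {a : Fin N}
    (hea : e a ≠ 1) : zeta ℓ (Function.update e a 1) = zeta ℓ e + ℓ a := by
  simpa [hea] using zeta_update ℓ e a 1

theorem zeta_le_zeta_update_one {ℓ : Fin N → ℝ} (e : Fin N → ZMod 2) {a : Fin N}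
    (ha : 0 ≤ ℓ a) : zeta ℓ e ≤ zeta ℓ (Function.update e a 1) := by
  by_cases hea : e a = 1
  · rw [← hea, Function.update_eq_self]
  · rw [zeta_update_one_of_ne_one ℓ hea]
    exact le_add_of_nonneg_right ha

theorem zeta_le_zeta_update_zero_add {ℓ : Fin N → ℝ} (e : Fin N → ZMod 2) {a : Fin N}
    (ha : 0 ≤ ℓ a) : zeta ℓ e ≤ zeta ℓ (Function.update e a 0) + ℓ a := by
  calc
    zeta ℓ e ≤ zeta ℓ (Function.update e a 1) := zeta_le_zeta_update_one e ha
    _ = zeta ℓ (Function.update (Function.update e a 0) a 1) := by rw [Function.update_idem]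
    _ = zeta ℓ (Function.update e a 0) + ℓ a := zeta_update_one_of_ne_one ℓ (by simp)

theorem zeta_le_zeta_update_zero_update_one {ℓ : Fin N → ℝ} {e : Fin N → ZMod 2}
    {a b : Fin N} (ha : 0 ≤ ℓ a) (hab : ℓ a ≤ ℓ b) (heb : e b ≠ 1) :
    zeta ℓ e ≤ zeta ℓ (Function.update (Function.update e a 0) b 1) := by
  have hb : Function.update e a 0 b ≠ 1 := by
    rw [Function.update_apply]
    split_ifs
    · exact zero_ne_one
    · exact heb
  calc
    zeta ℓ e ≤ zeta ℓ (Function.update e a 0) + ℓ a := zeta_le_zeta_update_zero_add e ha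
    _ ≤ zeta ℓ (Function.update e a 0) + ℓ b := by gcongr
    _ = zeta ℓ (Function.update (Function.update e a 0) b 1) :=
      (zeta_update_one_of_ne_one ℓ hb).symm

theorem lt_jstar_of_apply_eq_one {r : Equiv.Perm (Fin N)} {e : Fin N → ZMod 2}
    {j : Fin N} (hj : e (r j) = 1) : (j : ℕ) < jstar r e :=
  Finset.le_sup (f := fun j : Fin N => (j : ℕ) + 1) (by simpa using hj)

-- `Fin N` counts from `0`, so the index `jstar r e` is the position `j* + 1`.
theorem apply_jstar_ne_one {r : Equiv.Perm (Fin N)} {e : Fin N → ZMod 2}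
    (h : jstar r e < N) : e (r ⟨jstar r e, h⟩) ≠ 1 :=
  fun heq => (lt_jstar_of_apply_eq_one heq).false

theorem Child.zeta_le {r : Equiv.Perm (Fin N)} {ℓ : Fin N → ℝ} {e c : Fin N → ZMod 2}
    (hc : Child r e c) (hnn : ∀ i, 0 ≤ ℓ i) (hsorted : Monotone (ℓ ∘ r)) :
    zeta ℓ e ≤ zeta ℓ c := by
  rcases hc with ⟨rfl, _, rfl⟩ | ⟨-, h, rfl | rfl⟩
  · exact zeta_le_zeta_update_one _ (hnn _)
  · exact zeta_le_zeta_update_zero_update_one (hnn _)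
      (hsorted (Fin.mk_le_mk.2 (Nat.sub_le _ _))) (apply_jstar_ne_one h)
  · exact zeta_le_zeta_update_one _ (hnn _)

end

/-- with nonnegative reliabilities sorted along `r`, if `e'` is a
descendant of `e` in the EP tree then `ζ(e) ≤ ζ(e')`. -/
theorem stmt10 {N : ℕ} (r : Equiv.Perm (Fin N)) (ℓ : Fin N → ℝ)
    (hnn : ∀ i, 0 ≤ ℓ i)
    (hsorted : ∀ i j : Fin N, i ≤ j → ℓ (r i) ≤ ℓ (r j))
    (e e' : Fin N → ZMod 2) (hdesc : Relation.TransGen (Child r) e e') :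
    zeta ℓ e ≤ zeta ℓ e' := by
  have hmono : Monotone (ℓ ∘ r) := fun i j hij => hsorted i j hij
  induction hdesc with
  | single hchild => exact hchild.zeta_le hnn hmono
  | tail _ hchild ih => exact ih.trans (hchild.zeta_le hnn hmono)
end

section
/- (Lemma 1, early termination / Taipale–Pursley condition) Let C ⊆ F_2^N be a code whose minimum Hamming distance is at least d, i.e., any two distinct elements of C differ in at least d coordinates, and let ℓ ∈ ℝ^N with ℓ_i ≥ 0 for all i. Fix z ∈ F_2^N and let e ∈ F_2^N satisfy z ⊕ e ∈ C. Let m = |{i : e_i = 1}| be the Hamming weight of e, and suppose m < d ≤ N and ζ(e) ≤ min { Σ_{i ∈ T} ℓ_i : T ⊆ {i : e_i = 0}, |T| = d − m }. Then for every e' ∈ F_2^N with z ⊕ e' ∈ C, one has ζ(e') ≥ ζ(e); that is, e minimizes the soft weight among all error patterns producing codewords, so z ⊕ e is a maximum-likelihood decoding result. -/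
open scoped BigOperators

section SoftWeight

open Finset

variable {ι M : Type*} [Fintype ι] {α : ι → Type*} [∀ i, DecidableEq (α i)]

section Zero

variable [∀ i, Zero (α i)] {e e' : ∀ i, α i}

/-- The soft weight of an error pattern over arbitrary alphabets `α i`: the total reliability of
its nonzero coordinates. Over the binary alphabet it is `zeta`. -/
def softWeight [AddCommMonoid M] (ℓ : ι → M) (e : ∀ i, α i) : M :=
  ∑ i with e i ≠ 0, ℓ i

theorem sum_le_softWeight [AddCommMonoid M] [Preorder M] [AddLeftMono M] {ℓ : ι → M}
    (hℓ : ∀ i, 0 ≤ ℓ i) {T : Finset ι} (hT : ∀ i ∈ T, e i ≠ 0) :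
    ∑ i ∈ T, ℓ i ≤ softWeight ℓ e :=
  sum_le_sum_of_subset_of_nonneg (fun i hi ↦ by simpa using hT i hi) fun i _ _ ↦ hℓ i

theorem hammingDist_le_hammingNorm_add_card (e e' : ∀ i, α i) :
    hammingDist e e' ≤ hammingNorm e + #{i | e i = 0 ∧ e' i ≠ 0} := by
  classical
  calc
    hammingDist e e' ≤ #{i | e i ≠ 0 ∨ e i = 0 ∧ e' i ≠ 0} := card_le_card (by grind)
    _ ≤ hammingNorm e + #{i | e i = 0 ∧ e' i ≠ 0} := by
      rw [filter_or]
      exact card_union_le _ _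

theorem exists_hammingNorm_add_card_eq_of_le_hammingDist {d : ℕ} (hed : hammingNorm e ≤ d)
    (hd : d ≤ hammingDist e e') :
    ∃ T : Finset ι, (∀ i ∈ T, e i = 0 ∧ e' i ≠ 0) ∧ hammingNorm e + #T = d := by
  have hcard : d - hammingNorm e ≤ #{i | e i = 0 ∧ e' i ≠ 0} :=
    Nat.sub_le_iff_le_add'.2 (hd.trans (hammingDist_le_hammingNorm_add_card e e'))
  obtain ⟨T, hT, hTcard⟩ := exists_subset_card_eq hcard
  exact ⟨T, fun i hi ↦ by simpa using hT hi, by rw [hTcard, Nat.add_sub_cancel' hed]⟩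

/-- At most `hammingNorm e` of the coordinates in which `e` and `e'` differ lie in the support of
`e`; at all the others `e` vanishes and `e'` does not, and `T` is chosen among those. -/
theorem softWeight_le_softWeight_of_le_hammingDist [AddCommMonoid M] [Preorder M] [AddLeftMono M]
    {ℓ : ι → M} (hℓ : ∀ i, 0 ≤ ℓ i) {d : ℕ} (hed : hammingNorm e ≤ d)
    (hT : ∀ T : Finset ι, (∀ i ∈ T, e i = 0) → hammingNorm e + #T = d →
      softWeight ℓ e ≤ ∑ i ∈ T, ℓ i)
    (hd : d ≤ hammingDist e e') :
    softWeight ℓ e ≤ softWeight ℓ e' := by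
  obtain ⟨T, hTee', hTcard⟩ := exists_hammingNorm_add_card_eq_of_le_hammingDist hed hd
  calc
    softWeight ℓ e ≤ ∑ i ∈ T, ℓ i := hT T (fun i hi ↦ (hTee' i hi).1) hTcard
    _ ≤ softWeight ℓ e' := sum_le_softWeight hℓ fun i hi ↦ (hTee' i hi).2

end Zero

theorem hammingDist_add_left [∀ i, Add (α i)] [∀ i, IsLeftCancelAdd (α i)] (z e e' : ∀ i, α i) :
    hammingDist (z + e) (z + e') = hammingDist e e' :=
  hammingDist_comp (fun i ↦ (z i + ·)) fun i ↦ add_right_injective (z i)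

theorem stmt18_general [∀ i, AddLeftCancelMonoid (α i)] [AddCommMonoid M] [Preorder M]
    [AddLeftMono M] {ℓ : ι → M} (hℓ : ∀ i, 0 ≤ ℓ i) {C : Set (∀ i, α i)} {d : ℕ} {z e e' : ∀ i, α i}
    (hdist : ∀ c ∈ C, z + e ≠ c → d ≤ hammingDist (z + e) c) (hed : hammingNorm e ≤ d)
    (hT : ∀ T : Finset ι, (∀ i ∈ T, e i = 0) → hammingNorm e + #T = d →
      softWeight ℓ e ≤ ∑ i ∈ T, ℓ i)
    (he' : z + e' ∈ C) :
    softWeight ℓ e ≤ softWeight ℓ e' := by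
  obtain rfl | hne := eq_or_ne e e'
  · exact le_rfl
  · have hd : d ≤ hammingDist (z + e) (z + e') := hdist _ he' ((add_right_injective z).ne hne)
    rw [hammingDist_add_left] at hd
    exact softWeight_le_softWeight_of_le_hammingDist hℓ hed hT hd

end SoftWeight

section Binary

open Finset

theorem zmod_two_ne_zero_iff {a : ZMod 2} : a ≠ 0 ↔ a = 1 := by
  decide +revert

theorem zeta_eq_softWeight {N : ℕ} (ℓ : Fin N → ℝ) (e : Fin N → ZMod 2) :
    zeta ℓ e = softWeight ℓ e := by
  simp only [zeta, softWeight, sum_filter, zmod_two_ne_zero_iff]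

theorem hammingNorm_eq_card_eq_one {ι : Type*} [Fintype ι] (e : ι → ZMod 2) :
    hammingNorm e = #{i | e i = 1} := by
  simp only [hammingNorm, zmod_two_ne_zero_iff]

end Binary

/-- Lemma 1, early termination / Taipale–Pursley condition: let `C`
have minimum Hamming distance at least `d`, `ℓ ≥ 0`, and `z ⊕ e ∈ C` with Hamming
weight `m = |{i : e_i = 1}|`, `m < d ≤ N`. If `ζ(e)` is at most the sum of the
`d − m` smallest reliabilities among `{ℓ_i : e_i = 0}` (i.e. `ζ(e) ≤ Σ_{i ∈ T} ℓ_i`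
for every `T ⊆ {i : e_i = 0}` with `|T| = d − m`), then `ζ(e') ≥ ζ(e)` for every
`e'` with `z ⊕ e' ∈ C`: `z ⊕ e` is a maximum-likelihood decoding result. -/
theorem stmt18 {N : ℕ} (ℓ : Fin N → ℝ) (hnn : ∀ i, 0 ≤ ℓ i)
    (C : Set (Fin N → ZMod 2)) (d : ℕ)
    (hdist : ∀ c₁ ∈ C, ∀ c₂ ∈ C, c₁ ≠ c₂ → d ≤ hammingDist c₁ c₂)
    (z e : Fin N → ZMod 2) (hze : z + e ∈ C)
    (m : ℕ) (hm : m = (Finset.univ.filter fun i => e i = 1).card)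
    (hmd : m < d) (hdN : d ≤ N)
    (hcond : ∀ T : Finset (Fin N), (∀ i ∈ T, e i = 0) → T.card = d - m →
      zeta ℓ e ≤ ∑ i ∈ T, ℓ i) :
    ∀ e' : Fin N → ZMod 2, z + e' ∈ C → zeta ℓ e ≤ zeta ℓ e' := by
  intro e' he'
  rw [← hammingNorm_eq_card_eq_one] at hm
  simp only [zeta_eq_softWeight] at hcond ⊢
  exact stmt18_general hnn (hdist _ hze) (by lia) (fun T hTe hTcard ↦ hcond T hTe (by lia)) he'
end
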